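/- arXiv:2604.21140 — 3 statements merged into one kernel-verified Lean document; each statement's English description precedes it below -/
import Mathlib

section
/- Let S be a string of length n over Σ ∪ {φ} and let 1 ≤ i ≤ n. Then (i) S[1..i] ≈ rev(S)[n−i+1..n] if and only if the prefix S[1..i] is a palindrome, and (ii) S[i..n] ≈ rev(S)[1..n−i+1] if and only if the suffix S[i..n] is a palindrome. (These two alignments are exactly the entries M[i] and M[n+i−1] of the self-matching-convolution M = mconv(S, rev(S)), so M[i] = 1 iff S has a palindromic prefix of length i and M[n+i−1] = 1 iff S has a palindromic suffix starting at position i.) -/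
/-- Characters over `Σ ∪ {φ}`: `none` is the wildcard `φ`, `some a` is a solid letter. -/
def cmatch {α : Type*} (a b : Option α) : Prop := a = b ∨ a = none ∨ b = none

instance {α : Type*} [DecidableEq α] (a b : Option α) : Decidable (cmatch a b) := by
  unfold cmatch; infer_instance

/-- Two equal-length strings match iff they match pointwise. -/
def smatch {α : Type*} (s t : List (Option α)) : Prop := List.Forall₂ cmatch s t

/-- A wildcard string is a palindrome iff it matches its reverse. -/
def IsWPal {α : Type*} (s : List (Option α)) : Prop := smatch s s.reverse

/-- 1-based inclusive factor `S[i..j]`. -/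
def factor {β : Type*} (S : List β) (i j : ℕ) : List β := (S.drop (i - 1)).take (j - i + 1)

/-- 1-based character access (indices are kept in bounds by hypotheses). -/
def chA {α : Type*} (S : List (Option α)) (i : ℕ) : Option α := S.getD (i - 1) none
/-- the prefix `S[1..i]` matches `rev(S)[n−i+1..n]` iff that prefix is a
palindrome, and the suffix `S[i..n]` matches `rev(S)[1..n−i+1]` iff that suffix is a
palindrome (these are the self-matching-convolution entries `M[i]` and `M[n+i−1]`). -/
theorem stmt2 {α : Type*} (S : List (Option α)) (n i : ℕ)
    (hlen : S.length = n) (hi1 : 1 ≤ i) (hin : i ≤ n) :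
    (smatch (factor S 1 i) (factor S.reverse (n - i + 1) n) ↔ IsWPal (factor S 1 i)) ∧
    (smatch (factor S i n) (factor S.reverse 1 (n - i + 1)) ↔ IsWPal (factor S i n)) := by
  have h1 : factor S.reverse (n - i + 1) n = (factor S 1 i).reverse := by
    unfold factor
    have e1 : n - (n - i + 1) + 1 = i := by omega
    have e2 : i - 1 + 1 = i := by omega
    apply List.ext_getElem
    · simp; omega
    · intro k hk1 hk2
      simp at hk1 hk2
      simp
      congr 1
      omega
  have h2 : factor S.reverse 1 (n - i + 1) = (factor S i n).reverse := by
    unfold factor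
    apply List.ext_getElem
    · simp; omega
    · intro k hk1 hk2
      simp at hk1 hk2
      simp
      congr 1
      omega
  rw [h1, h2]
  exact ⟨Iff.rfl, Iff.rfl⟩
end

section
/- Let S be a string of length n over Σ ∪ {φ}, and let u ≥ 1 be an integer. Let M = {min(i·u, n) : 1 ≤ i ≤ ⌈n/u⌉} be the set of anchors, and for each integer center 1 ≤ c ≤ n define the detected radius D(c) as the maximum of {0} ∪ {m − c : m ∈ M, c ≤ m, 2c − m ≥ 1, and S[2c−m..m] is a palindrome} ∪ {c − 1 : 2c − 1 ≤ n and S[1..2c−1] is a palindrome}. Then for every center c, the inequality r_c − u < D(c) ≤ r_c holds; that is, the radii detected from palindromic prefixes and suffixes of the prefixes S[1..min(iu, n)] underestimate each maximal radius by strictly less than u. -/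
/-- The maximal radius `r_c` of a subpalindrome centered at `c`
(`c − r ≥ 1` is expressed as `r < c`). -/
noncomputable def maxRad {α : Type*} (S : List (Option α)) (c : ℕ) : ℕ :=
  sSup {r | r < c ∧ c + r ≤ S.length ∧ IsWPal (factor S (c - r) (c + r))}
/-- The radius `D(c)` detected at center `c` from palindromic suffixes of the anchored
prefixes `S[1..min(i·u, n)]` (for anchors `m = min(i·u, n)`, `1 ≤ i ≤ ⌈n/u⌉`), together
with the palindromic-prefix case `S[1..2c−1]`. The condition `2c − m ≥ 1` is expressed
as `m + 1 ≤ 2c`, and `⌈n/u⌉` as `(n + u − 1)/u`. -/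
noncomputable def detRad {α : Type*} (S : List (Option α)) (u c : ℕ) : ℕ :=
  sSup (({0} : Set ℕ) ∪
    {d | ∃ m, (∃ i, 1 ≤ i ∧ i ≤ (S.length + u - 1) / u ∧ m = min (i * u) S.length) ∧
          c ≤ m ∧ m + 1 ≤ 2 * c ∧ IsWPal (factor S (2 * c - m) m) ∧ d = m - c} ∪
    {d | 2 * c - 1 ≤ S.length ∧ IsWPal (factor S 1 (2 * c - 1)) ∧ d = c - 1})

theorem pal_iff_aux {α : Type*} (S : List (Option α)) (c r : ℕ) (hr : r < c)
    (hn : c + r ≤ S.length) :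
    IsWPal (factor S (c - r) (c + r)) ↔
      ∀ k, k ≤ r → cmatch (chA S (c - k)) (chA S (c + k)) ∧
        cmatch (chA S (c + k)) (chA S (c - k)) := by
  have hl : (factor S (c - r) (c + r)).length = 2 * r + 1 := by
    simp only [factor, List.length_take, List.length_drop]; omega
  have hg : ∀ i (h : i < (factor S (c - r) (c + r)).length),
      (factor S (c - r) (c + r))[i] = chA S (c - r + i) := by
    intro i h
    have h' : c - r - 1 + i < S.length := by omega
    have e : c - r + i - 1 = c - r - 1 + i := by omega
    simp [factor, chA, e, List.getElem?_eq_getElem h']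
  unfold IsWPal smatch
  rw [List.forall₂_iff_get]
  simp only [List.length_reverse, true_and, List.get_eq_getElem, List.getElem_reverse, hg, hl]
  constructor
  · intro h k hk
    have h1 := h (r - k) (by omega) (by omega)
    have h2 := h (r + k) (by omega) (by omega)
    have e1 : c - r + (r - k) = c - k := by omega
    have e2 : c - r + (2 * r + 1 - 1 - (r - k)) = c + k := by omega
    have e3 : c - r + (r + k) = c + k := by omega
    have e4 : c - r + (2 * r + 1 - 1 - (r + k)) = c - k := by omega
    rw [e1, e2] at h1
    rw [e3, e4] at h2
    exact ⟨h1, h2⟩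
  · intro h i hi _
    rcases le_total i r with hir | hir
    · have e1 : c - r + i = c - (r - i) := by omega
      have e2 : c - r + (2 * r + 1 - 1 - i) = c + (r - i) := by omega
      rw [e1, e2]
      exact (h (r - i) (by omega)).1
    · have e1 : c - r + i = c + (i - r) := by omega
      have e2 : c - r + (2 * r + 1 - 1 - i) = c - (i - r) := by omega
      rw [e1, e2]
      exact (h (i - r) (by omega)).2

/-- with block size `u ≥ 1`, the radii detected from palindromic prefixes and
suffixes of the prefixes `S[1..min(iu, n)]` satisfy `r_c − u < D(c) ≤ r_c` for every center
(the strict inequality is written additively as `r_c < D(c) + u`). -/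
theorem stmt9 {α : Type*} (S : List (Option α)) (n u : ℕ)
    (hlen : S.length = n) (hu : 1 ≤ u) (c : ℕ) (hc1 : 1 ≤ c) (hcn : c ≤ n) :
    maxRad S c < detRad S u c + u ∧ detRad S u c ≤ maxRad S c := by
  subst hlen
  set A := {r | r < c ∧ c + r ≤ S.length ∧ IsWPal (factor S (c - r) (c + r))} with hA
  have hAb : BddAbove A := ⟨c, fun r hr => hr.1.le⟩
  have h0 : 0 ∈ A := by
    refine ⟨by omega, by omega, ?_⟩
    rw [pal_iff_aux S c 0 (by omega) (by omega)]
    intro k hk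
    obtain rfl : k = 0 := by omega
    exact ⟨Or.inl rfl, Or.inl rfl⟩
  have hmem : maxRad S c ∈ A := Nat.sSup_mem ⟨0, h0⟩ hAb
  set B := (({0} : Set ℕ) ∪
    {d | ∃ m, (∃ i, 1 ≤ i ∧ i ≤ (S.length + u - 1) / u ∧ m = min (i * u) S.length) ∧
          c ≤ m ∧ m + 1 ≤ 2 * c ∧ IsWPal (factor S (2 * c - m) m) ∧ d = m - c} ∪
    {d | 2 * c - 1 ≤ S.length ∧ IsWPal (factor S 1 (2 * c - 1)) ∧ d = c - 1}) with hB
  have hBA : B ⊆ A := by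
    rintro d ((hd | ⟨m, ⟨i, hi1, hi2, hm⟩, hcm, hm2, hp, rfl⟩) | ⟨hn, hp, rfl⟩)
    · rw [Set.mem_singleton_iff] at hd
      rw [hd]; exact h0
    · have hmn : m ≤ S.length := hm ▸ min_le_right _ _
      refine ⟨by omega, by omega, ?_⟩
      have e1 : c - (m - c) = 2 * c - m := by omega
      have e2 : c + (m - c) = m := by omega
      rw [e1, e2]; exact hp
    · refine ⟨by omega, by omega, ?_⟩
      have e1 : c - (c - 1) = 1 := by omega
      have e2 : c + (c - 1) = 2 * c - 1 := by omega
      rw [e1, e2]; exact hp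
  have hBb : BddAbove B := hAb.mono hBA
  have hBmem : detRad S u c ∈ B := Nat.sSup_mem ⟨0, Or.inl (Or.inl rfl)⟩ hBb
  refine ⟨?_, le_csSup hAb (hBA hBmem)⟩
  generalize maxRad S c = r at hmem
  obtain ⟨hrc, hrn, hp⟩ := hmem
  rcases lt_or_ge r u with hru | hru
  · omega
  have hdm := Nat.div_add_mod (c + r) u
  have hml := Nat.mod_lt (c + r) (show u > 0 by omega)
  obtain ⟨m, hm⟩ : ∃ m, m = (c + r) / u * u := ⟨_, rfl⟩
  rw [mul_comm, ← hm] at hdm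
  have hin : m - c ∈ B := by
    refine Or.inl (Or.inr ⟨m, ⟨(c + r) / u, ?_, ?_, ?_⟩, by omega, by omega, ?_, rfl⟩)
    · exact Nat.div_pos (by omega) (by omega)
    · exact Nat.div_le_div_right (by omega)
    · rw [← hm, min_eq_left (by omega)]
    · have e1 : c - (m - c) = 2 * c - m := by omega
      have e2 : c + (m - c) = m := by omega
      have := (pal_iff_aux S c (m - c) (by omega) (by omega)).2
        (fun k hk => (pal_iff_aux S c r hrc hrn).1 hp k (by omega))
      rwa [e1, e2] at this
  have hle : m - c ≤ detRad S u c := le_csSup hBb hin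
  omega
end

section
/- Let S and T be solid strings of length n over an alphabet Σ, let $ ∉ Σ, let S′ = S · $^n, let k ≥ 0, and fix 1 ≤ i ≤ n. Suppose j (1 ≤ j ≤ n) is the position of the (k+1)-th mismatch between T and S′[i..i+n−1], i.e., j is the least index such that T[j] ≠ S′[i+j−1] and |{t : 1 ≤ t ≤ j, T[t] ≠ S′[i+t−1]}| = k + 1. Then: if j > n − i + 1, the Hamming distance on the overlap satisfies H(T[1..n−i+1], S[i..n]) = n + k + 2 − j − i; and if j ≤ n − i + 1, then H(T[1..n−i+1], S[i..n]) ≥ k + 1. -/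
/-- Hamming distance of two (equal-length) solid strings: number of mismatched positions. -/
def hammS {α : Type*} [DecidableEq α] (s t : List α) : ℕ :=
  (List.zipWith (fun a b => if a = b then 0 else 1) s t).sum

theorem hammS_eq_sum {α : Type*} [DecidableEq α] (d : α) (s t : List α) (h : s.length = t.length) :
    hammS s t = ∑ x ∈ Finset.range s.length, (if s.getD x d = t.getD x d then 0 else 1) := by
  induction s generalizing t with
  | nil => simp [hammS]
  | cons a s ih =>
    cases t with
    | nil => simp at h
    | cons b t =>
      have h2 := ih t (by simpa using h)
      rw [List.length_cons, Finset.sum_range_succ']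
      simp only [List.getD_cons_succ, List.getD_cons_zero]
      rw [← h2]
      simp [hammS, add_comm]

theorem cnt_eq_sum (p : ℕ → Prop) [DecidablePred p] (j : ℕ) :
    ((Finset.Icc 1 j).filter p).card = ∑ x ∈ Finset.range j, (if p (x + 1) then 1 else 0) := by
  induction j with
  | zero => simp
  | succ j ih =>
    rw [Finset.sum_range_succ, ← ih, Finset.card_filter, Finset.card_filter,
      Finset.sum_Icc_succ_top (by omega)]

/-- let `S′ = S · $^n` (the sentinel `$` is the symbol `d`, occurring in
neither `S` nor `T`), and let `j` be the position of the `(k+1)`-th mismatch between `T` and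
`S′[i..i+n−1]` (i.e. position `j` is a mismatch and there are exactly `k+1` mismatches among
positions `1..j`).  Then: if `j > n − i + 1`, the Hamming distance on the overlap is
`H(T[1..n−i+1], S[i..n]) = n + k + 2 − j − i`; and if `j ≤ n − i + 1`, it is at least `k+1`.
Characters are accessed 1-based via `getD` (all accesses are in bounds). -/
theorem stmt13 {α : Type*} [DecidableEq α] (S T : List α) (n k : ℕ) (d : α)
    (hS : S.length = n) (hT : T.length = n) (hdS : d ∉ S) (hdT : d ∉ T)
    (i j : ℕ) (hi1 : 1 ≤ i) (hin : i ≤ n) (hj1 : 1 ≤ j) (hjn : j ≤ n)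
    (hmis : T.getD (j - 1) d ≠ (S ++ List.replicate n d).getD (i + j - 2) d)
    (hcnt : ((Finset.Icc 1 j).filter
        (fun t => T.getD (t - 1) d ≠ (S ++ List.replicate n d).getD (i + t - 2) d)).card
        = k + 1) :
    (n - i + 1 < j →
        hammS (factor T 1 (n - i + 1)) (factor S i n) = n + k + 2 - j - i) ∧
    (j ≤ n - i + 1 →
        k + 1 ≤ hammS (factor T 1 (n - i + 1)) (factor S i n)) := by
  have hH : hammS (factor T 1 (n - i + 1)) (factor S i n) = ∑ x ∈ Finset.range (n - i + 1),
      (if T.getD (x + 1 - 1) d ≠ (S ++ List.replicate n d).getD (i + (x + 1) - 2) d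
        then 1 else 0) := by
    have l1 : (factor T 1 (n - i + 1)).length = n - i + 1 := by
      simp [factor, hT]; omega
    have l2 : (factor S i n).length = n - i + 1 := by
      simp [factor, hS]; omega
    rw [hammS_eq_sum d _ _ (l1.trans l2.symm), l1]
    apply Finset.sum_congr rfl
    intro x hx
    rw [Finset.mem_range] at hx
    have e1 : (factor T 1 (n - i + 1)).getD x d = T.getD (x + 1 - 1) d := by
      simp only [factor, List.getD_eq_getElem?_getD, List.getElem?_take, List.getElem?_drop]
      rw [if_pos (by omega)]
      congr 2
      omega
    have e2 : (factor S i n).getD x d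
        = (S ++ List.replicate n d).getD (i + (x + 1) - 2) d := by
      simp only [factor, List.getD_eq_getElem?_getD, List.getElem?_take, List.getElem?_drop]
      rw [if_pos (by omega), List.getElem?_append_left (by omega)]
      congr 2
      omega
    rw [e1, e2]
    split_ifs <;> simp_all
  rw [cnt_eq_sum] at hcnt
  rw [hH]
  constructor
  · intro hlt
    rw [← Finset.sum_range_add_sum_Ico _ hlt.le] at hcnt
    have hc : ∑ x ∈ Finset.Ico (n - i + 1) j,
      (if T.getD (x + 1 - 1) d ≠ (S ++ List.replicate n d).getD (i + (x + 1) - 2) d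
        then 1 else 0) = j - (n - i + 1) := by
      rw [← Nat.card_Ico (n - i + 1) j, Finset.card_eq_sum_ones]
      apply Finset.sum_congr rfl
      intro x hx
      rw [Finset.mem_Ico] at hx
      rw [if_pos]
      have e : (S ++ List.replicate n d).getD (i + (x + 1) - 2) d = d := by
        rw [List.getD_append_right _ _ _ _ (by omega)]
        simp [List.getD_eq_getElem?_getD, List.getElem?_replicate]
        try split_ifs <;> rfl
      rw [e, List.getD_eq_getElem _ _ (by omega)]
      intro h
      exact hdT (h ▸ List.getElem_mem _)
    rw [hc] at hcnt
    omega
  · intro hle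
    rw [← hcnt]
    exact Finset.sum_le_sum_of_subset (Finset.range_mono hle)
end
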